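/- Let 𝔢 be a dispersion relation of class C⁴ satisfying condition (M) and let V be a potential with Φ_{1,2}(V) < ∞. Then the eigenvalues of H(𝔢,V) can only accumulate at points of Thr(𝔢): for every compact set Δ ⊂ ℝ with Δ ∩ Thr(𝔢) = ∅, the sum over eigenvalues λ ∈ Δ of H(𝔢,V) of the dimensions of the corresponding eigenspaces is finite. -/

import Mathlib

open MeasureTheory Complex Real
open scoped ENNReal

noncomputable section

namespace LatSch

/-- The lattice `Γ = ℤ^d`. -/
abbrev Γd (d : ℕ) := Fin d → ℤ

/-- The Hilbert space `ℓ²(Γ)`. -/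
abbrev L2 (d : ℕ) := lp (fun _ : Γd d => ℂ) 2

/-- Euclidean norm of a lattice point. -/
def lnorm {d : ℕ} (x : Γd d) : ℝ := Real.sqrt (∑ i, ((x i : ℝ)) ^ 2)

/-- The standard basis vector `δ_x` of `ℓ²(Γ)`. -/
def delta {d : ℕ} (x : Γd d) : L2 d := lp.single 2 x 1

local notation "⟪" a ", " b "⟫" => @inner ℂ _ _ a b

/-- The cube `[-π, π]^d`, a fundamental domain of the torus. -/
def torusBox (d : ℕ) : Set (Fin d → ℝ) := Set.univ.pi fun _ => Set.Icc (-π) π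

/-- `⟨p, m⟩` for `p ∈ ℝ^d`, `m ∈ ℤ^d`. -/
def dotZ {d : ℕ} (p : Fin d → ℝ) (m : Γd d) : ℝ := ∑ i, p i * (m i : ℝ)

/-- Fourier coefficient `f̂(m) = (2π)^{-d} ∫_{[-π,π]^d} f(p) e^{i⟨p,m⟩} dp`. -/
def fCoeff {d : ℕ} (f : (Fin d → ℝ) → ℝ) (m : Γd d) : ℂ :=
  ((1 / (2 * π) ^ d : ℝ) : ℂ) *
    ∫ p in torusBox d, (f p : ℂ) * Complex.exp (Complex.I * (dotZ p m : ℝ))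

/-- `H` is the Fourier multiplier (hopping matrix) `h(f)`, characterized by its
matrix elements `⟨δ_x, H δ_y⟩ = f̂(x - y)`. -/
def IsMultiplier {d : ℕ} (f : (Fin d → ℝ) → ℝ) (H : L2 d →L[ℂ] L2 d) : Prop :=
  ∀ x y : Γd d, ⟪delta x, H (delta y)⟫ = fCoeff f (x - y)

/-- `M` is the operator of multiplication by the potential `V`. -/
def IsMulOp {d : ℕ} (V : Γd d → ℝ) (M : L2 d →L[ℂ] L2 d) : Prop :=
  ∀ (ψ : L2 d) (x : Γd d), (M ψ : ∀ _ : Γd d, ℂ) x = (V x : ℂ) * (ψ : ∀ _ : Γd d, ℂ) x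

/-- Partial derivative `∂_{p_k} f (p)`. -/
def pd {d : ℕ} (f : (Fin d → ℝ) → ℝ) (k : Fin d) (p : Fin d → ℝ) : ℝ :=
  fderiv ℝ f p (Pi.single k 1)

/-- `|∇f|²(p) = Σ_k (∂_{p_k} f(p))²`. -/
def gradSq {d : ℕ} (f : (Fin d → ℝ) → ℝ) (p : Fin d → ℝ) : ℝ := ∑ k, pd f k p ^ 2

/-- The Hessian matrix of `f` at `p`. -/
def hess {d : ℕ} (f : (Fin d → ℝ) → ℝ) (p : Fin d → ℝ) : Matrix (Fin d) (Fin d) ℝ :=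
  Matrix.of fun i j => fderiv ℝ (fun q => fderiv ℝ f q (Pi.single j 1)) p (Pi.single i 1)

/-- All critical points of `f` are nondegenerate (`f` is a Morse function). -/
def IsMorse {d : ℕ} (f : (Fin d → ℝ) → ℝ) : Prop :=
  ∀ p, fderiv ℝ f p = 0 → (hess f p).det ≠ 0

/-- `2πℤ^d`-periodicity. -/
def Periodic2pi {d : ℕ} (f : (Fin d → ℝ) → ℝ) : Prop :=
  ∀ (p : Fin d → ℝ) (m : Γd d), f (p + fun i => 2 * π * (m i : ℝ)) = f p

/-- A dispersion relation: a `2πℤ^d`-periodic function with minimum `0`. -/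
def IsDispersion {d : ℕ} (f : (Fin d → ℝ) → ℝ) : Prop :=
  Periodic2pi f ∧ (∀ p, 0 ≤ f p) ∧ (∃ p, f p = 0)

/-- Condition (M): `𝔢` and `|∇𝔢|²` are Morse functions. -/
def CondM {d : ℕ} (f : (Fin d → ℝ) → ℝ) : Prop := IsMorse f ∧ IsMorse (gradSq f)

/-- `Φ_{m,n}(V) = (Σ_x |V(x)|^{1/m} (1+|x|)^n)^m`, valued in `[0,∞]`. -/
def Phi {d : ℕ} (m n : ℕ) (V : Γd d → ℝ) : ℝ≥0∞ :=
  (∑' x : Γd d, ENNReal.ofReal (|V x| ^ ((1 : ℝ) / m) * (1 + lnorm x) ^ n)) ^ m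

/-- The set of eigenvectors of `H` (with real eigenvalue). -/
def eigvecs {d : ℕ} (H : L2 d →L[ℂ] L2 d) : Set (L2 d) :=
  {ψ : L2 d | ψ ≠ 0 ∧ ∃ μ : ℝ, H ψ = (μ : ℂ) • ψ}

/-- `N_pp[H]`: the Hilbert-space dimension of the closed linear span of all
eigenvectors of `H`. -/
def Npp {d : ℕ} (H : L2 d →L[ℂ] L2 d) : Cardinal :=
  Module.rank ℂ ((Submodule.span ℂ (eigvecs H)).topologicalClosure)

/-- The Fourier transform `ĝ_x(p) = (i/2·|∇𝔢(p)|² + ⟨∇𝔢(p), x⟩) e^{-i⟨p,x⟩}`. -/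
def ghat {d : ℕ} (e : (Fin d → ℝ) → ℝ) (x : Γd d) (p : Fin d → ℝ) : ℂ :=
  ((Complex.I / 2) * ((gradSq e p : ℝ) : ℂ) + ((∑ k, pd e k p * (x k : ℝ) : ℝ) : ℂ)) *
    Complex.exp (-(Complex.I * (dotZ p x : ℝ)))

/-- `g : Γ → ℓ²(Γ)` is the family of vectors `g_x` with Fourier transform `ĝ_x`. -/
def IsGVec {d : ℕ} (e : (Fin d → ℝ) → ℝ) (g : Γd d → L2 d) : Prop :=
  ∀ x m : Γd d,
    (g x : ∀ _ : Γd d, ℂ) m =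
      ((1 / (2 * π) ^ d : ℝ) : ℂ) *
        ∫ p in torusBox d, ghat e x p * Complex.exp (Complex.I * (dotZ p m : ℝ))

/-- `C` is the bounded self-adjoint realization
`C_V = Σ_x i V(x) (|δ_x⟩⟨g_x| - |g_x⟩⟨δ_x|)` of the commutator `i[V, A(𝔢)]`. -/
def IsCommOp {d : ℕ} (V : Γd d → ℝ) (g : Γd d → L2 d) (C : L2 d →L[ℂ] L2 d) : Prop :=
  ∀ ψ : L2 d,
    HasSum (fun x : Γd d =>
      (Complex.I * (V x : ℂ)) • (⟪g x, ψ⟫ • delta x - ⟪delta x, ψ⟫ • g x)) (C ψ)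

/-- `R` is the resolvent `(z - H)^{-1}`. -/
def IsResolventAt {d : ℕ} (H : L2 d →L[ℂ] L2 d) (z : ℂ) (R : L2 d →L[ℂ] L2 d) : Prop :=
  R.comp (z • (1 : L2 d →L[ℂ] L2 d) - H) = 1 ∧ (z • (1 : L2 d →L[ℂ] L2 d) - H).comp R = 1

/-- `‖f‖_{C^m} ≤ C`: all partial derivatives of order `≤ m` are bounded by `C`. -/
def CmNormLe {d : ℕ} (m : ℕ) (f : (Fin d → ℝ) → ℝ) (C : ℝ) : Prop :=
  ∀ j : ℕ, j ≤ m → ∀ (p : Fin d → ℝ) (k : Fin j → Fin d),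
    |iteratedFDeriv ℝ j f p (fun i => Pi.single (k i) 1)| ≤ C

/-- `K(𝔢) ≥ K`: at every critical point, every eigenvalue `λ` of the Hessian
satisfies `|λ|^{1/2} ≥ K`. -/
def MinCurvGe {d : ℕ} (f : (Fin d → ℝ) → ℝ) (K : ℝ) : Prop :=
  ∀ p, fderiv ℝ f p = 0 → ∀ (lam : ℝ) (v : Fin d → ℝ), v ≠ 0 →
    (hess f p).mulVec v = lam • v → K ^ 2 ≤ |lam|

/-- The set of thresholds `Thr(𝔢) = 𝔢(Crit(𝔢))`. -/
def Thr {d : ℕ} (f : (Fin d → ℝ) → ℝ) : Set ℝ := f '' {p | fderiv ℝ f p = 0}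


/-- The number of strictly negative eigenvalues of `C`, counted with multiplicity:
the dimension of the span of eigenvectors with strictly negative eigenvalue. -/
def NegCount {d : ℕ} (C : L2 d →L[ℂ] L2 d) : Cardinal :=
  Module.rank ℂ (Submodule.span ℂ
    {ψ : L2 d | ψ ≠ 0 ∧ ∃ μ : ℝ, μ < 0 ∧ C ψ = (μ : ℂ) • ψ})

/-- The number of strictly positive eigenvalues of `C`, counted with multiplicity. -/
def PosCount {d : ℕ} (C : L2 d →L[ℂ] L2 d) : Cardinal :=
  Module.rank ℂ (Submodule.span ℂ
    {ψ : L2 d | ψ ≠ 0 ∧ ∃ μ : ℝ, 0 < μ ∧ C ψ = (μ : ℂ) • ψ})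




/-- Normalised measure on the circle, as in the multivariate Fourier file. -/
local instance instCircleMeasureSpace : MeasureSpace UnitAddCircle := ⟨AddCircle.haarAddCircle⟩

local instance instCircleHaar : Measure.IsAddHaarMeasure (volume : Measure UnitAddCircle) :=
  inferInstanceAs (Measure.IsAddHaarMeasure AddCircle.haarAddCircle)

local instance instCircleProb : IsProbabilityMeasure (volume : Measure UnitAddCircle) :=
  inferInstanceAs (IsProbabilityMeasure AddCircle.haarAddCircle)

/-- The torus. -/
abbrev Tor (d : ℕ) := UnitAddTorus (Fin d)

/-- Multiplication by a continuous function on `L²` of the torus. -/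
def mulTor {d : ℕ} (g : C(Tor d, ℂ)) :
    Lp ℂ 2 (volume : Measure (Tor d)) →L[ℂ] Lp ℂ 2 (volume : Measure (Tor d)) :=
  (ContinuousLinearMap.mul ℂ ℂ).holderL volume ∞ 2 2 (ContinuousMap.toLp ∞ volume ℂ g)

lemma mulTor_coe {d : ℕ} (g : C(Tor d, ℂ)) (f : Lp ℂ 2 (volume : Measure (Tor d))) :
    mulTor g f =ᵐ[volume] fun t => g t * f t := by
  have h1 : mulTor g f =ᵐ[volume] _ := (ContinuousLinearMap.mul ℂ ℂ).coeFn_holder (r := 2)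
    (ContinuousMap.toLp ∞ volume ℂ g) f
  filter_upwards [h1, ContinuousMap.coeFn_toLp (p := ∞) (𝕜 := ℂ) volume g] with t h1 h2
  rw [h1, h2]; rfl

lemma mulTor_norm {d : ℕ} (g : C(Tor d, ℂ)) (f : Lp ℂ 2 (volume : Measure (Tor d))) :
    ‖mulTor g f‖ ≤ ‖g‖ * ‖f‖ := by
  refine Lp.norm_le_mul_norm_of_ae_le_mul ?_
  filter_upwards [mulTor_coe g f] with t ht
  rw [ht, norm_mul]
  gcongr
  exact g.norm_coe_le_norm t

lemma mulTor_mul {d : ℕ} (g h : C(Tor d, ℂ)) (f : Lp ℂ 2 (volume : Measure (Tor d))) :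
    mulTor (g * h) f = mulTor g (mulTor h f) := by
  apply Lp.ext
  filter_upwards [mulTor_coe (g * h) f, mulTor_coe g (mulTor h f), mulTor_coe h f] with t a b c
  rw [a, b, c]; simp [mul_assoc]

lemma mulTor_one {d : ℕ} (f : Lp ℂ 2 (volume : Measure (Tor d))) :
    mulTor (1 : C(Tor d, ℂ)) f = f := by
  apply Lp.ext
  filter_upwards [mulTor_coe 1 f] with t a
  rw [a]; simp

lemma mulTor_toLp {d : ℕ} (g h : C(Tor d, ℂ)) :
    mulTor g (ContinuousMap.toLp 2 volume ℂ h) = ContinuousMap.toLp 2 volume ℂ (g * h) := by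
  apply Lp.ext
  filter_upwards [mulTor_coe g (ContinuousMap.toLp 2 volume ℂ h),
    ContinuousMap.coeFn_toLp (p := 2) (𝕜 := ℂ) volume h,
    ContinuousMap.coeFn_toLp (p := 2) (𝕜 := ℂ) volume (g * h)] with t a b c
  rw [a, b, c]; simp

/-- The Fourier isometry. -/
abbrev UF (d : ℕ) : Lp ℂ 2 (volume : Measure (Tor d)) ≃ₗᵢ[ℂ] L2 d :=
  (UnitAddTorus.mFourierBasis (d := Fin d)).repr

/-- The Fourier multiplier with a continuous symbol on the torus. -/
def TT {d : ℕ} (g : C(Tor d, ℂ)) : L2 d →L[ℂ] L2 d :=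
  (UF d).toContinuousLinearEquiv.toContinuousLinearMap.comp
    ((mulTor g).comp (UF d).symm.toContinuousLinearEquiv.toContinuousLinearMap)

lemma TT_apply {d : ℕ} (g : C(Tor d, ℂ)) (ψ : L2 d) :
    TT g ψ = UF d (mulTor g ((UF d).symm ψ)) := rfl

lemma TT_norm {d : ℕ} (g : C(Tor d, ℂ)) (ψ : L2 d) : ‖TT g ψ‖ ≤ ‖g‖ * ‖ψ‖ := by
  rw [TT_apply, LinearIsometryEquiv.norm_map]
  simpa using mulTor_norm g ((UF d).symm ψ)

lemma TT_mul {d : ℕ} (g h : C(Tor d, ℂ)) (ψ : L2 d) : TT (g * h) ψ = TT g (TT h ψ) := by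
  simp [TT_apply, mulTor_mul]

lemma TT_one {d : ℕ} (ψ : L2 d) : TT (1 : C(Tor d, ℂ)) ψ = ψ := by
  simp [TT_apply, mulTor_one]

lemma TT_add {d : ℕ} (g h : C(Tor d, ℂ)) : TT (g + h) = TT g + TT h := by
  ext ψ; simp [TT_apply, mulTor]

lemma TT_smul {d : ℕ} (c : ℂ) (g : C(Tor d, ℂ)) : TT (c • g) = c • TT g := by
  ext ψ; simp [TT_apply, mulTor]

/-- `TT` as a linear map. -/
def TTl (d : ℕ) : C(Tor d, ℂ) →ₗ[ℂ] (L2 d →L[ℂ] L2 d) where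
  toFun := TT
  map_add' := TT_add
  map_smul' := TT_smul

lemma TT_sub {d : ℕ} (g h : C(Tor d, ℂ)) : TT (g - h) = TT g - TT h := (TTl d).map_sub g h

lemma TT_sum {d : ℕ} {ι : Type*} (s : Finset ι) (g : ι → C(Tor d, ℂ)) :
    TT (∑ i ∈ s, g i) = ∑ i ∈ s, TT (g i) := map_sum (TTl d) g s

lemma UF_symm_delta {d : ℕ} (x : Γd d) : (UF d).symm (delta x) =
    ContinuousMap.toLp 2 volume ℂ (UnitAddTorus.mFourier x) := by
  have := (UnitAddTorus.mFourierBasis (d := Fin d)).repr_symm_single x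
  rw [UnitAddTorus.coe_mFourierBasis] at this
  exact this

lemma inner_delta {d : ℕ} (x : Γd d) (ψ : L2 d) : ⟪delta x, ψ⟫ = ψ x := by
  rw [delta, lp.inner_single_left]; simp

lemma TT_matrix {d : ℕ} (g : C(Tor d, ℂ)) (x y : Γd d) :
    ⟪delta x, TT g (delta y)⟫ = UnitAddTorus.mFourierCoeff g (x - y) := by
  rw [inner_delta, TT_apply, UF_symm_delta, mulTor_toLp, UnitAddTorus.mFourierBasis_repr,
    UnitAddTorus.mFourierCoeff_toLp]
  unfold UnitAddTorus.mFourierCoeff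
  congr 1; ext t
  rw [neg_sub, sub_eq_add_neg, UnitAddTorus.mFourier_add]
  simp; ring

lemma op_ext {d : ℕ} (A B : L2 d →L[ℂ] L2 d)
    (h : ∀ x y : Γd d, ⟪delta x, A (delta y)⟫ = ⟪delta x, B (delta y)⟫) : A = B := by
  apply lp.ext_continuousLinearMap (by simp)
  intro y
  ext
  simp only [ContinuousLinearMap.comp_apply]
  have h2 := h (y := y)
  simp_rw [inner_delta] at h2
  apply h2

lemma TT_adj {d : ℕ} (g : C(Tor d, ℂ)) (hg : ∀ t, starRingEnd ℂ (g t) = g t) (φ ψ : L2 d) :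
    ⟪TT g φ, ψ⟫ = ⟪φ, TT g ψ⟫ := by
  have h1 : ⟪TT g φ, ψ⟫ = ⟪mulTor g ((UF d).symm φ), (UF d).symm ψ⟫ := by
    rw [TT_apply, ← LinearIsometryEquiv.inner_map_map (UF d)]; simp
  have h2 : ⟪φ, TT g ψ⟫ = ⟪(UF d).symm φ, mulTor g ((UF d).symm ψ)⟫ := by
    rw [TT_apply, ← LinearIsometryEquiv.inner_map_map (UF d)]; simp
  rw [h1, h2, L2.inner_def, L2.inner_def]
  apply integral_congr_ae
  filter_upwards [mulTor_coe g ((UF d).symm φ), mulTor_coe g ((UF d).symm ψ)] with t a b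
  rw [a, b]
  simp only [RCLike.inner_apply, map_mul, hg]
  ring

lemma lift_aux {d : ℕ} {g : (Fin d → ℝ) → ℝ} (hg : Periodic2pi g) (s : Fin d → ℝ) :
    g (fun i => -(2 * π) * (Quotient.out (s i : UnitAddCircle))) = g (fun i => -(2 * π) * s i) := by
  have h : ∀ i, ∃ n : ℤ, (Quotient.out (s i : UnitAddCircle) : ℝ) = s i + n := by
    intro i
    have h1 : ((Quotient.out (s i : UnitAddCircle) : ℝ) : UnitAddCircle) = (s i : UnitAddCircle) :=
      Quotient.out_eq _
    obtain ⟨n, hn⟩ := AddSubgroup.mem_zmultiples_iff.1 (QuotientAddGroup.eq.1 h1)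
    refine ⟨-n, ?_⟩
    simp only [zsmul_eq_mul, mul_one] at hn
    push_cast
    linarith
  choose n hn using h
  rw [← hg (fun i => -(2 * π) * s i) (fun i => - n i)]
  congr 1
  ext i
  simp [hn i]; ring

/-- Continuous periodic functions as functions on the torus, `t ↦ g (-2π t)`. -/
def liftT {d : ℕ} (g : (Fin d → ℝ) → ℝ) (hg : Periodic2pi g) (hc : Continuous g) :
    C(Tor d, ℂ) where
  toFun t := (g (fun i => -(2 * π) * (Quotient.out (t i))) : ℂ)
  continuous_toFun := by
    have hq : IsOpenQuotientMap (Pi.map (fun (_ : Fin d) (s : ℝ) => (s : UnitAddCircle))) :=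
      IsOpenQuotientMap.piMap fun _ => QuotientAddGroup.isOpenQuotientMap_mk
    rw [← hq.continuous_comp_iff]
    have : (fun t : Tor d => (g (fun i => -(2 * π) * (Quotient.out (t i))) : ℂ)) ∘
        (Pi.map (fun (_ : Fin d) (s : ℝ) => (s : UnitAddCircle))) =
        fun s => ((g (fun i => -(2 * π) * s i) : ℝ) : ℂ) := by
      ext s
      simp only [Function.comp, Pi.map]
      rw [lift_aux hg]
    rw [this]
    fun_prop

lemma liftT_coe {d : ℕ} {g : (Fin d → ℝ) → ℝ} (hg : Periodic2pi g) (hc : Continuous g)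
    (s : Fin d → ℝ) :
    liftT g hg hc (fun i => (s i : UnitAddCircle)) = (g (fun i => -(2 * π) * s i) : ℂ) := by
  change ((g _ : ℝ) : ℂ) = _
  rw [lift_aux hg]

lemma liftT_bound {d : ℕ} {g : (Fin d → ℝ) → ℝ} (hg : Periodic2pi g) (hc : Continuous g)
    (p : Fin d → ℝ) : |g p| ≤ ‖liftT g hg hc‖ := by
  have := (liftT g hg hc).norm_coe_le_norm (fun i => ((-(2 * π))⁻¹ * p i : ℝ))
  rw [liftT_coe] at this
  have h2 : (fun i => -(2 * π) * ((-(2 * π))⁻¹ * p i)) = p := by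
    ext i
    have := Real.pi_pos
    field_simp
  rw [h2] at this
  simpa using this

lemma liftT_norm_le {d : ℕ} {g : (Fin d → ℝ) → ℝ} (hg : Periodic2pi g) (hc : Continuous g)
    {C : ℝ} (hC : 0 ≤ C) (h : ∀ p, |g p| ≤ C) : ‖liftT g hg hc‖ ≤ C := by
  rw [ContinuousMap.norm_le _ hC]
  intro t
  change ‖((g _ : ℝ) : ℂ)‖ ≤ C
  simpa using h _

lemma liftT_real {d : ℕ} {g : (Fin d → ℝ) → ℝ} (hg : Periodic2pi g) (hc : Continuous g)
    (t : Tor d) : starRingEnd ℂ (liftT g hg hc t) = liftT g hg hc t :=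
  Complex.conj_ofReal _

lemma mFourier_coe {d : ℕ} (m : Γd d) (s : Fin d → ℝ) :
    UnitAddTorus.mFourier m (fun i => (s i : UnitAddCircle)) =
      Complex.exp (2 * π * Complex.I * ∑ i, (m i : ℂ) * (s i : ℂ)) := by
  simp only [UnitAddTorus.mFourier, ContinuousMap.coe_mk, fourier_coe_apply]
  rw [← Complex.exp_sum, Finset.mul_sum]
  congr 1
  refine Finset.sum_congr rfl fun i _ => ?_
  simp; ring

open scoped Pointwise in
lemma liftT_coeff {d : ℕ} {g : (Fin d → ℝ) → ℝ} (hg : Periodic2pi g) (hc : Continuous g)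
    (m : Γd d) : UnitAddTorus.mFourierCoeff (liftT g hg hc) m = fCoeff g m := by
  rw [UnitAddTorus.mFourierCoeff_eq_integral _ _ (fun _ => -(1/2))]
  simp_rw [mFourier_coe, liftT_coe]
  have hset : {x : Fin d → ℝ | ∀ i, x i ∈ Set.Ioc (-(1/2) : ℝ) (-(1/2) + 1)} =
      Set.univ.pi fun _ => Set.Ioc (-(1/2) : ℝ) (1/2) := by
    ext x; norm_num [Set.mem_pi]
  rw [hset]
  have hae : (Set.univ.pi fun _ => Set.Ioc (-(1/2) : ℝ) (1/2) : Set (Fin d → ℝ)) =ᵐ[volume]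
      Set.univ.pi fun _ => Set.Icc (-(1/2) : ℝ) (1/2) := by
    rw [volume_pi]; exact Measure.pi_Ioc_ae_eq_pi_Icc
  rw [setIntegral_congr_set hae]
  unfold fCoeff
  have key := Measure.setIntegral_comp_smul (volume : Measure (Fin d → ℝ))
    (fun p => (g p : ℂ) * Complex.exp (Complex.I * (dotZ p m : ℝ)))
    (R := -(2 * π)) (s := Set.univ.pi fun _ => Set.Icc (-(1/2) : ℝ) (1/2))
    (by have := Real.pi_pos; linarith)
  have himg : (-(2 * π)) • (Set.univ.pi fun _ => Set.Icc (-(1/2) : ℝ) (1/2) : Set (Fin d → ℝ)) =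
      torusBox d := by
    have hpi := Real.pi_pos
    have hne : -(2 * π) ≠ 0 := by linarith
    ext p
    rw [Set.mem_smul_set_iff_inv_smul_mem₀ hne]
    simp only [torusBox, Set.mem_pi, Set.mem_univ, true_implies, Pi.smul_apply, smul_eq_mul,
      Set.mem_Icc]
    refine forall_congr' fun i => ?_
    have : (-(2 * π))⁻¹ * p i = - (p i / (2 * π)) := by field_simp
    rw [this, neg_le_neg_iff, neg_le, div_le_iff₀ (by positivity), le_div_iff₀ (by positivity)]
    constructor <;> rintro ⟨a, b⟩ <;> constructor <;> linarith
  rw [himg] at key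
  have hscal : |((-(2 * π)) ^ Module.finrank ℝ (Fin d → ℝ))⁻¹| = 1 / (2 * π) ^ d := by
    rw [Module.finrank_fin_fun, abs_inv, abs_pow, abs_neg, abs_of_pos (by positivity), one_div]
  rw [hscal] at key
  rw [← Complex.real_smul, ← key]
  congr 1; ext s
  rw [smul_eq_mul, mul_comm]
  congr 2
  simp only [dotZ, Pi.smul_apply, smul_eq_mul, Pi.neg_apply]
  push_cast
  rw [Finset.mul_sum, Finset.mul_sum]
  refine Finset.sum_congr rfl fun i _ => ?_
  ring

lemma multiplier_eq {d : ℕ} {g : (Fin d → ℝ) → ℝ} (hg : Periodic2pi g) (hc : Continuous g)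
    (H : L2 d →L[ℂ] L2 d) (hH : IsMultiplier g H) : H = TT (liftT g hg hc) := by
  apply op_ext
  intro x y
  rw [hH x y, TT_matrix, liftT_coeff]

lemma periodic_shift {d : ℕ} {g : (Fin d → ℝ) → ℝ} (hg : Periodic2pi g) (v : Fin d → ℝ) :
    Periodic2pi (fun p => g (p + v)) := by
  intro p m
  have := hg (p + v) m
  simp only
  rw [← this]; congr 1; abel

lemma liftT_shift_coeff {d : ℕ} {g : (Fin d → ℝ) → ℝ} (hg : Periodic2pi g) (hc : Continuous g)
    (k : Fin d) (ε : ℝ) (hc' : Continuous (fun p => g (p + (Pi.single k ε : Fin d → ℝ)))) (m : Γd d) :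
    UnitAddTorus.mFourierCoeff (liftT _ (periodic_shift hg (Pi.single k ε)) hc') m =
      Complex.exp (-(Complex.I * (ε * m k))) * UnitAddTorus.mFourierCoeff (liftT g hg hc) m := by
  have hpi := Real.pi_pos
  set s : Fin d → ℝ := Pi.single k (-(ε / (2 * π))) with hs
  have hsh : ∀ t : Tor d, liftT _ (periodic_shift hg (Pi.single k ε)) hc' t =
      liftT g hg hc (t + fun i => (s i : UnitAddCircle)) := by
    intro t
    have ht : t = fun i => ((Quotient.out (t i) : ℝ) : UnitAddCircle) := by
      ext i; exact (Quotient.out_eq _).symm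
    rw [ht, liftT_coe]
    have : (fun i => ((Quotient.out (t i) : ℝ) : UnitAddCircle)) + (fun i => (s i : UnitAddCircle))
      = fun i => (((Quotient.out (t i) : ℝ) + s i : ℝ) : UnitAddCircle) := by
      ext i; simp
    rw [this, liftT_coe]
    congr 2
    ext i
    by_cases hi : i = k
    · subst hi; simp [hs]; field_simp; ring
    · simp [hs, hi]
  unfold UnitAddTorus.mFourierCoeff
  simp_rw [hsh]
  rw [← integral_sub_right_eq_self _ (fun i => (s i : UnitAddCircle)), ← integral_const_mul]
  congr 1; ext t
  simp only [sub_add_cancel, smul_eq_mul]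
  rw [← mul_assoc]
  congr 1
  have ht : t = fun i => ((Quotient.out (t i) : ℝ) : UnitAddCircle) := by
    ext i; exact (Quotient.out_eq _).symm
  rw [ht]
  have : (fun i => ((Quotient.out (t i) : ℝ) : UnitAddCircle)) - (fun i => (s i : UnitAddCircle))
      = fun i => (((Quotient.out (t i) : ℝ) - s i : ℝ) : UnitAddCircle) := by
      ext i; simp
  rw [this, mFourier_coe, mFourier_coe, ← Complex.exp_add]
  congr 1
  have h3 : ∑ i, ((-m) i : ℂ) * ((s i : ℝ) : ℂ) = m k * (ε / (2 * π)) := by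
    rw [Finset.sum_eq_single k]
    · simp [hs]
    · intro i _ hi; simp [hs, hi]
    · simp
  push_cast
  simp_rw [mul_sub]
  rw [Finset.sum_sub_distrib, mul_sub]
  push_cast at h3
  rw [h3]
  have : (π : ℂ) ≠ 0 := by exact_mod_cast hpi.ne'
  field_simp
  ring

/-- `D` is the diagonal operator with entries `w`. -/
def IsDiag {d : ℕ} (w : Γd d → ℂ) (D : L2 d →L[ℂ] L2 d) : Prop :=
  ∀ (ψ : L2 d) (x : Γd d), (D ψ : ∀ _ : Γd d, ℂ) x = w x * (ψ : ∀ _ : Γd d, ℂ) x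

lemma exists_diag {d : ℕ} (w : Γd d → ℂ) (C : ℝ) (hw : ∀ x, ‖w x‖ ≤ C) :
    ∃ D : L2 d →L[ℂ] L2 d, IsDiag w D := by
  have hmem : ∀ ψ : L2 d, Memℓp (fun x => w x * (ψ : ∀ _ : Γd d, ℂ) x) 2 := by
    intro ψ
    have h1 := ((lp.memℓp ψ).summable (by norm_num)).mul_left (|C| ^ (2 : ℝ≥0∞).toReal)
    refine memℓp_gen (h1.of_nonneg_of_le (fun x => by positivity) fun x => ?_)
    rw [norm_mul, Real.mul_rpow (norm_nonneg _) (norm_nonneg _)]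
    gcongr
    exact (hw x).trans (le_abs_self C)
  let L : L2 d →ₗ[ℂ] L2 d :=
    { toFun := fun ψ => ⟨_, hmem ψ⟩
      map_add' := fun a b => by
        ext x
        change w x * (a x + b x) = w x * a x + w x * b x
        ring
      map_smul' := fun c a => by
        ext x
        change w x * (c * a x) = c * (w x * a x)
        ring }
  refine ⟨L.mkContinuous |C| fun ψ => ?_, fun ψ x => rfl⟩
  have h : ‖L ψ‖ ≤ ‖(C : ℂ) • ψ‖ := by
    refine lp.norm_mono (by simp) fun x => ?_
    change ‖w x * ψ x‖ ≤ ‖(C : ℂ) * ψ x‖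
    rw [norm_mul, norm_mul]
    gcongr
    simpa using (hw x).trans (le_abs_self C)
  rwa [norm_smul, Complex.norm_real, Real.norm_eq_abs] at h

lemma diag_adj {d : ℕ} {w : Γd d → ℂ} {D D' : L2 d →L[ℂ] L2 d} (h : IsDiag w D)
    (h' : IsDiag (fun x => starRingEnd ℂ (w x)) D') (φ ψ : L2 d) : ⟪φ, D ψ⟫ = ⟪D' φ, ψ⟫ := by
  rw [lp.inner_eq_tsum, lp.inner_eq_tsum]
  congr 1; ext x
  rw [h, h']
  simp only [RCLike.inner_apply, map_mul, Complex.conj_conj]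
  ring

lemma diag_shift {d : ℕ} {g : (Fin d → ℝ) → ℝ} (hg : Periodic2pi g) (hc : Continuous g)
    (k : Fin d) (ε : ℝ) (hc' : Continuous (fun p => g (p + (Pi.single k ε : Fin d → ℝ))))
    (S : L2 d →L[ℂ] L2 d) (hS : IsDiag (fun x => Complex.exp (-(Complex.I * (ε * x k)))) S)
    (ψ : L2 d) :
    S (TT (liftT g hg hc) ψ) = TT (liftT _ (periodic_shift hg (Pi.single k ε)) hc') (S ψ) := by
  have : S.comp (TT (liftT g hg hc)) =
      (TT (liftT _ (periodic_shift hg (Pi.single k ε)) hc')).comp S := by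
    apply op_ext
    intro x y
    have hd : S (delta y) = Complex.exp (-(Complex.I * (ε * y k))) • delta y := by
      ext z
      rw [hS]
      change _ = _ * (delta y : ∀ _ : Γd d, ℂ) z
      by_cases hz : z = y
      · rw [hz]
      · have : (delta y : ∀ _ : Γd d, ℂ) z = 0 := by simp [delta, lp.single_apply, hz]
        rw [this]; simp
    simp only [ContinuousLinearMap.comp_apply]
    rw [hd, map_smul, inner_smul_right, TT_matrix, inner_delta, hS, ← inner_delta, TT_matrix,
      liftT_shift_coeff hg hc, ← mul_assoc, ← Complex.exp_add]
    congr 2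
    simp only [Pi.sub_apply]
    push_cast
    congr 1
    ring
  exact congrArg (fun A : L2 d →L[ℂ] L2 d => A ψ) this

lemma periodic_fderiv {d : ℕ} {g : (Fin d → ℝ) → ℝ} (hg : Periodic2pi g) (k : Fin d) :
    Periodic2pi (pd g k) := by
  intro p m
  unfold pd
  rw [← fderiv_comp_add_right]
  congr 2
  ext q
  exact hg q m

lemma hasDerivAt_line {d : ℕ} {g : (Fin d → ℝ) → ℝ} (hg : ContDiff ℝ 1 g) (k : Fin d)
    (p : Fin d → ℝ) (t : ℝ) :
    HasDerivAt (fun t : ℝ => g (p + (Pi.single k t : Fin d → ℝ)))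
      (pd g k (p + Pi.single k t)) t := by
  have h1 : HasDerivAt (fun t : ℝ => p + (Pi.single k t : Fin d → ℝ)) (Pi.single k 1) t := by
    have : HasDerivAt (fun t : ℝ => t • (Pi.single k 1 : Fin d → ℝ)) ((1 : ℝ) • Pi.single k 1) t :=
      (hasDerivAt_id t).smul_const _
    have h2 := this.const_add p
    rw [one_smul] at h2
    have h3 : (fun t : ℝ => p + (Pi.single k t : Fin d → ℝ)) =
        fun x => p + x • (Pi.single k 1 : Fin d → ℝ) := by
      ext s
      rw [← Pi.single_smul]; simp
    rw [h3]
    exact h2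
  exact ((hg.differentiable (by norm_num)).differentiableAt.hasFDerivAt).comp_hasDerivAt t h1

lemma continuous_pd {d : ℕ} {g : (Fin d → ℝ) → ℝ} (hg : ContDiff ℝ 1 g) (k : Fin d) :
    Continuous (pd g k) :=
  (hg.continuous_fderiv (by norm_num)).clm_apply continuous_const

lemma contDiff_pd {d : ℕ} {g : (Fin d → ℝ) → ℝ} (hg : ContDiff ℝ 2 g) (k : Fin d) :
    ContDiff ℝ 1 (pd g k) :=
  (hg.fderiv_right (m := 1) (by norm_num)).clm_apply contDiff_const

lemma lip_line {d : ℕ} {g : (Fin d → ℝ) → ℝ} (hp : Periodic2pi g) (hg : ContDiff ℝ 1 g)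
    (k : Fin d) : ∃ L : ℝ, 0 ≤ L ∧ ∀ (p : Fin d → ℝ) (ε : ℝ),
      |g (p + Pi.single k ε) - g p| ≤ L * |ε| := by
  refine ⟨‖liftT _ (periodic_fderiv hp k) (continuous_pd hg k)‖, norm_nonneg _, fun p ε => ?_⟩
  have := Convex.norm_image_sub_le_of_norm_hasDerivWithin_le
    (f := fun t : ℝ => g (p + (Pi.single k t : Fin d → ℝ)))
    (C := ‖liftT _ (periodic_fderiv hp k) (continuous_pd hg k)‖) (s := Set.univ) (x := 0) (y := ε)
    (fun t _ => (hasDerivAt_line hg k p t).hasDerivWithinAt)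
    (fun t _ => liftT_bound _ _ _) convex_univ trivial trivial
  simpa using this

lemma taylor_line {d : ℕ} {g : (Fin d → ℝ) → ℝ} (hg : ContDiff ℝ 1 g)
    (k : Fin d) (L : ℝ) (hL : 0 ≤ L)
    (h : ∀ (p : Fin d → ℝ) (ε : ℝ), |pd g k (p + Pi.single k ε) - pd g k p| ≤ L * |ε|)
    (p : Fin d → ℝ) (ε : ℝ) (hε : 0 ≤ ε) :
    |g (p + Pi.single k ε) - g p - ε * pd g k p| ≤ L * ε * ε := by
  have := Convex.norm_image_sub_le_of_norm_hasDerivWithin_le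
    (f := fun t : ℝ => g (p + (Pi.single k t : Fin d → ℝ)) - t * pd g k p)
    (f' := fun t : ℝ => pd g k (p + (Pi.single k t : Fin d → ℝ)) - 1 * pd g k p)
    (C := L * ε) (s := Set.Icc 0 ε) (x := 0) (y := ε)
    (fun t _ => ((hasDerivAt_line hg k p t).sub
      ((hasDerivAt_id t).mul_const (pd g k p))).hasDerivWithinAt)
    (fun t ht => by
      rw [one_mul, Real.norm_eq_abs]
      refine (h p t).trans ?_
      rw [abs_of_nonneg ht.1]
      gcongr
      exact ht.2) (convex_Icc _ _) (by simp [hε]) (by simp [hε])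
  simp only [Pi.single_zero, add_zero, zero_mul, sub_zero, Real.norm_eq_abs,
    abs_of_nonneg hε] at this
  calc _ = |g (p + Pi.single k ε) - ε * pd g k p - g p| := by congr 1; ring
    _ ≤ _ := this

lemma diag_tendsto {d : ℕ} (k : Fin d) (S : ℕ → L2 d →L[ℂ] L2 d) (ε : ℕ → ℝ)
    (hε : Filter.Tendsto ε Filter.atTop (nhds 0))
    (hS : ∀ n, IsDiag (fun x => Complex.exp (-(Complex.I * (ε n * x k)))) (S n)) (u : L2 d) :
    Filter.Tendsto (fun n => ⟪u, S n u⟫) Filter.atTop (nhds ⟪u, u⟫) := by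
  have key : ∀ v : L2 d, ⟪u, v⟫ = ∑' x, v x * starRingEnd ℂ (u x) := by
    intro v
    rw [lp.inner_eq_tsum]
    rfl
  have hsum : Summable fun x => ‖u x * starRingEnd ℂ (u x)‖ := by
    have := (lp.summable_inner (𝕜 := ℂ) u u).norm
    exact this
  simp_rw [key]
  refine tendsto_tsum_of_dominated_convergence hsum ?_ ?_
  · intro x
    have h1 : ∀ n, S n u x * starRingEnd ℂ (u x) =
        Complex.exp (-(Complex.I * (ε n * x k))) * (u x * starRingEnd ℂ (u x)) := by
      intro n
      rw [hS n, mul_assoc]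
    simp_rw [h1]
    have h2 : Filter.Tendsto (fun n => Complex.exp (-(Complex.I * (ε n * x k)))) Filter.atTop
        (nhds (Complex.exp (-(Complex.I * (((0 : ℝ) : ℂ) * x k))))) := by
      have hc : Continuous fun t : ℝ => Complex.exp (-(Complex.I * ((t : ℂ) * x k))) := by fun_prop
      exact (hc.tendsto 0).comp hε
    have h3 := h2.mul_const (u x * starRingEnd ℂ (u x))
    have h4 : Complex.exp (-(Complex.I * (((0 : ℝ) : ℂ) * x k))) = 1 := by simp
    rw [h4, one_mul] at h3
    exact h3
  · refine Filter.Eventually.of_forall fun n x => ?_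
    rw [hS n, mul_assoc, norm_mul]
    have : ‖Complex.exp (-(Complex.I * (ε n * x k)))‖ = 1 := by
      rw [Complex.norm_exp]; simp
    rw [this, one_mul]

lemma diag_bound {d : ℕ} {w w' : Γd d → ℂ} {D D' : L2 d →L[ℂ] L2 d} (h : IsDiag w D)
    (h' : IsDiag w' D') (hw : ∀ x, ‖w x‖ ≤ ‖w' x‖) (ψ : L2 d) : ‖D ψ‖ ≤ ‖D' ψ‖ := by
  refine lp.norm_mono (by simp) fun x => ?_
  rw [h, h', norm_mul, norm_mul]
  gcongr
  exact hw x

/-- The regularised virial estimate at fixed `ε`. -/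
lemma virial_eps {d : ℕ} {e : (Fin d → ℝ) → ℝ} (hp : Periodic2pi e) (he : ContDiff ℝ 2 e)
    (k : Fin d) (L : ℝ) (hL : 0 ≤ L)
    (hlip : ∀ (p : Fin d → ℝ) (ε : ℝ), |pd e k (p + Pi.single k ε) - pd e k p| ≤ L * |ε|)
    (V : Γd d → ℝ) (Mv W : L2 d →L[ℂ] L2 d) (hMv : IsMulOp V Mv) (w : Γd d → ℂ)
    (hW : IsDiag w W) (hw : ∀ x, |V x| * (1 + |(x k : ℝ)|) ≤ ‖w x‖)
    (hc : Continuous e) (hck : Continuous (pd e k))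
    (μ : ℝ) (ψ : L2 d) (hψ : (TT (liftT e hp hc) + Mv) ψ = (μ : ℂ) • ψ)
    (ε : ℝ) (hε : 0 < ε) (S : L2 d →L[ℂ] L2 d)
    (hS : IsDiag (fun x => Complex.exp (-(Complex.I * (ε * x k)))) S) :
    ‖⟪TT (liftT _ (periodic_fderiv hp k) hck) ψ, S (TT (liftT _ (periodic_fderiv hp k) hck) ψ)⟫‖
      ≤ L * ε * (‖ψ‖ * ‖TT (liftT _ (periodic_fderiv hp k) hck) ψ‖) +
        (2 * ‖W ψ‖ * ‖TT (liftT _ (periodic_fderiv hp k) hck) ψ‖ + L * ‖ψ‖ * ‖W ψ‖) := by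
  have hc' : Continuous (fun p => e (p + (Pi.single k ε : Fin d → ℝ))) := by fun_prop
  have hck' : Continuous (fun p => pd e k (p + (Pi.single k ε : Fin d → ℝ))) := by fun_prop
  set E := liftT e hp hc with hE
  set A := liftT _ (periodic_fderiv hp k) hck with hA
  set E' := liftT _ (periodic_shift hp (Pi.single k ε)) hc' with hE'
  set A' := liftT _ (periodic_shift (periodic_fderiv hp k) (Pi.single k ε)) hck' with hA'
  set u := TT A ψ with hu
  have hε0 : (ε : ℂ) ≠ 0 := by exact_mod_cast hε.ne'
  have hSE : ∀ φ, S (TT E φ) = TT E' (S φ) := diag_shift hp hc k ε hc' S hS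
  have hSA : ∀ φ, S (TT A φ) = TT A' (S φ) := diag_shift (periodic_fderiv hp k) hck k ε hck' S hS
  have hEn : ‖E' - E - (ε : ℂ) • A‖ ≤ L * ε * ε := by
    rw [ContinuousMap.norm_le _ (by positivity)]
    intro t
    have := taylor_line (he.of_le (by norm_num)) k L hL hlip
      (fun i => -(2 * π) * (Quotient.out (t i))) ε hε.le
    refine le_trans (le_of_eq ?_) this
    rw [← Real.norm_eq_abs, ← Complex.norm_real]
    push_cast
    rfl
  have hAn : ‖A' - A‖ ≤ L * ε := by
    rw [ContinuousMap.norm_le _ (by positivity)]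
    intro t
    have := hlip (fun i => -(2 * π) * (Quotient.out (t i))) ε
    rw [abs_of_pos hε] at this
    refine le_trans (le_of_eq ?_) this
    rw [← Real.norm_eq_abs, ← Complex.norm_real]
    push_cast
    rfl
  have hSn : ∀ φ, ‖S φ‖ ≤ ‖φ‖ := by
    intro φ
    refine lp.norm_mono (by simp) fun x => ?_
    rw [hS, norm_mul, Complex.norm_exp]
    simp
  set c : Γd d → ℂ := fun x => (ε : ℂ)⁻¹ * (Complex.exp (-(Complex.I * (ε * x k))) - 1) with hcdef
  have hf : IsDiag c ((ε : ℂ)⁻¹ • (S - 1)) := by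
    intro φ x
    change (ε : ℂ)⁻¹ * (S φ x - φ x) = _
    rw [hS]; ring
  have hcx : ∀ x, ‖c x‖ ≤ |(x k : ℝ)| := by
    intro x
    have h1 := Real.norm_exp_I_mul_ofReal_sub_one_le (x := -(ε * x k))
    have h2 : Complex.exp (-(Complex.I * (ε * x k))) =
        Complex.exp (Complex.I * ((-(ε * x k) : ℝ) : ℂ)) := by
      congr 1; push_cast; ring
    rw [hcdef]
    simp only
    rw [h2, norm_mul, norm_inv, Complex.norm_real, Real.norm_eq_abs, abs_of_pos hε]
    rw [Real.norm_eq_abs, abs_neg, abs_mul, abs_of_pos hε] at h1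
    rw [inv_mul_le_iff₀ hε]
    exact h1
  obtain ⟨f', hf'⟩ := exists_diag (fun x => starRingEnd ℂ (c x)) (ε⁻¹ * 2) (by
    intro x
    rw [RCLike.norm_conj, hcdef]
    simp only
    rw [norm_mul, norm_inv, Complex.norm_real, Real.norm_eq_abs, abs_of_pos hε]
    gcongr
    refine (norm_sub_le _ _).trans ?_
    rw [Complex.norm_exp]; simp; norm_num)
  set f := (ε : ℂ)⁻¹ • (S - 1) with hfdef
  have hfV : ‖f (Mv ψ)‖ ≤ ‖W ψ‖ := by
    refine lp.norm_mono (by simp) fun x => ?_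
    rw [hf, hMv, hW, ← mul_assoc, norm_mul (w x), norm_mul _ (ψ x), norm_mul]
    refine mul_le_mul_of_nonneg_right ?_ (norm_nonneg _)
    refine le_trans ?_ (hw x)
    rw [Complex.norm_real, Real.norm_eq_abs]
    nlinarith [hcx x, abs_nonneg (V x), norm_nonneg (c x)]
  have hfV' : ‖f' (Mv ψ)‖ ≤ ‖W ψ‖ := by
    refine lp.norm_mono (by simp) fun x => ?_
    rw [hf', hMv, hW, ← mul_assoc, norm_mul (w x), norm_mul _ (ψ x), norm_mul, RCLike.norm_conj]
    refine mul_le_mul_of_nonneg_right ?_ (norm_nonneg _)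
    refine le_trans ?_ (hw x)
    rw [Complex.norm_real, Real.norm_eq_abs]
    nlinarith [hcx x, abs_nonneg (V x), norm_nonneg (c x)]
  have hV : ‖Mv ψ‖ ≤ ‖W ψ‖ := by
    refine lp.norm_mono (by simp) fun x => ?_
    rw [hMv, hW, norm_mul, norm_mul]
    gcongr
    refine le_trans ?_ (hw x)
    rw [Complex.norm_real, Real.norm_eq_abs]
    nlinarith [abs_nonneg (V x), abs_nonneg (x k : ℝ)]
  have hVsym : ∀ φ χ, ⟪φ, Mv χ⟫ = ⟪Mv φ, χ⟫ := by
    have h1 : IsDiag (fun x => (V x : ℂ)) Mv := hMv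
    have h2 : IsDiag (fun x => starRingEnd ℂ (V x : ℂ)) Mv := by
      intro φ x; simpa using hMv φ x
    exact diag_adj h1 h2
  have hEsym : ∀ φ χ, ⟪TT E φ, χ⟫ = ⟪φ, TT E χ⟫ := TT_adj E (liftT_real hp hc)
  have hAsym : ∀ φ χ, ⟪TT A φ, χ⟫ = ⟪φ, TT A χ⟫ :=
    TT_adj A (liftT_real (periodic_fderiv hp k) hck)
  have hAE : TT A (TT E ψ) = TT E u := by rw [hu, ← TT_mul, ← TT_mul, mul_comm]
  have hψ1 : TT E ψ = (μ : ℂ) • ψ - Mv ψ := by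
    rw [← hψ]; simp
  have comE : (ε : ℂ) • (TT E (f u) - f (TT E u)) = - TT (E' - E) (S u) := by
    simp only [hfdef, ContinuousLinearMap.smul_apply, ContinuousLinearMap.sub_apply,
      ContinuousLinearMap.one_apply, map_smul, map_sub, hSE, TT_sub]
    rw [← smul_sub, smul_smul, mul_inv_cancel₀ hε0, one_smul]
    abel
  have comA : (ε : ℂ) • (f (TT A (Mv ψ)) - TT A (f (Mv ψ))) = TT (A' - A) (S (Mv ψ)) := by
    simp only [hfdef, ContinuousLinearMap.smul_apply, ContinuousLinearMap.sub_apply,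
      ContinuousLinearMap.one_apply, map_smul, map_sub, hSA, TT_sub]
    rw [← smul_sub, smul_smul, mul_inv_cancel₀ hε0, one_smul]
    abel
  have vir : ⟪ψ, TT E (f u) - f (TT E u)⟫ = ⟪ψ, f (TT A (Mv ψ))⟫ - ⟪ψ, Mv (f u)⟫ := by
    have h1 : ⟪ψ, TT E (f u)⟫ = (μ : ℂ) * ⟪ψ, f u⟫ - ⟪Mv ψ, f u⟫ := by
      rw [← hEsym, hψ1, inner_sub_left, inner_smul_left, Complex.conj_ofReal]
    have h2 : f (TT E u) = (μ : ℂ) • f u - f (TT A (Mv ψ)) := by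
      rw [← hAE, hψ1, map_sub, map_smul, map_sub, map_smul, hu]
    rw [inner_sub_right, h1, h2, inner_sub_right, inner_smul_right, hVsym]
    ring
  have b1 : ‖⟪ψ, Mv (f u)⟫‖ ≤ ‖W ψ‖ * ‖u‖ := by
    rw [hVsym, diag_adj hf hf']
    exact (norm_inner_le_norm _ _).trans (by gcongr)
  have b2 : ‖⟪ψ, TT A (f (Mv ψ))⟫‖ ≤ ‖W ψ‖ * ‖u‖ := by
    rw [← hAsym]
    refine (norm_inner_le_norm _ _).trans ?_
    rw [mul_comm]
    gcongr
  have b3 : ‖f (TT A (Mv ψ)) - TT A (f (Mv ψ))‖ ≤ L * ‖W ψ‖ := by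
    have h1 : ε * ‖f (TT A (Mv ψ)) - TT A (f (Mv ψ))‖ ≤ ε * (L * ‖W ψ‖) := by
      have := congrArg norm comA
      rw [norm_smul, Complex.norm_real, Real.norm_eq_abs, abs_of_pos hε] at this
      rw [this]
      calc _ ≤ ‖A' - A‖ * ‖S (Mv ψ)‖ := TT_norm _ _
        _ ≤ (L * ε) * ‖W ψ‖ := by
          gcongr
          exact (hSn _).trans hV
        _ = _ := by ring
    exact le_of_mul_le_mul_left h1 hε
  have b4 : ‖⟪ψ, f (TT A (Mv ψ))⟫‖ ≤ ‖W ψ‖ * ‖u‖ + L * ‖ψ‖ * ‖W ψ‖ := by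
    have : f (TT A (Mv ψ)) = TT A (f (Mv ψ)) + (f (TT A (Mv ψ)) - TT A (f (Mv ψ))) := by abel
    rw [this, inner_add_right]
    refine (norm_add_le _ _).trans ?_
    refine add_le_add b2 ?_
    refine (norm_inner_le_norm _ _).trans ?_
    calc _ ≤ ‖ψ‖ * (L * ‖W ψ‖) := by gcongr
      _ = _ := by ring
  have b5 : ‖⟪ψ, TT E (f u) - f (TT E u)⟫‖ ≤ 2 * ‖W ψ‖ * ‖u‖ + L * ‖ψ‖ * ‖W ψ‖ := by
    rw [vir]
    refine (norm_sub_le _ _).trans ?_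
    linarith
  have main : (ε : ℂ) * ⟪u, S u⟫ = - ((ε : ℂ) * ⟪ψ, TT E (f u) - f (TT E u)⟫) -
      ⟪ψ, TT (E' - E - (ε : ℂ) • A) (S u)⟫ := by
    rw [← inner_smul_right, ← inner_smul_right, comE, hu, hAsym, ← hu]
    rw [TT_sub _ ((ε : ℂ) • A), TT_smul]
    simp only [ContinuousLinearMap.sub_apply, ContinuousLinearMap.smul_apply, inner_sub_right,
      inner_neg_right, map_smul, inner_smul_right]
    ring
  have h6 := congrArg norm main
  rw [norm_mul, Complex.norm_real, Real.norm_eq_abs, abs_of_pos hε] at h6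
  have h7 : ε * ‖⟪u, S u⟫‖ ≤ ε * (L * ε * (‖ψ‖ * ‖u‖) +
      (2 * ‖W ψ‖ * ‖u‖ + L * ‖ψ‖ * ‖W ψ‖)) := by
    rw [h6]
    refine (norm_sub_le _ _).trans ?_
    rw [norm_neg, norm_mul, Complex.norm_real, Real.norm_eq_abs, abs_of_pos hε]
    have h8 : ‖⟪ψ, TT (E' - E - (ε : ℂ) • A) (S u)⟫‖ ≤ ε * (L * ε * (‖ψ‖ * ‖u‖)) := by
      refine (norm_inner_le_norm _ _).trans ?_
      calc _ ≤ ‖ψ‖ * ((L * ε * ε) * ‖u‖) := by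
            gcongr
            refine (TT_norm _ _).trans ?_
            gcongr
            exact hSn u
        _ = _ := by ring
    rw [mul_add]
    have h9 := mul_le_mul_of_nonneg_left b5 hε.le
    linarith
  exact le_of_mul_le_mul_left h7 hε

/-- The virial estimate. -/
lemma virial {d : ℕ} {e : (Fin d → ℝ) → ℝ} (hp : Periodic2pi e) (he : ContDiff ℝ 2 e)
    (k : Fin d) (hc : Continuous e) (hck : Continuous (pd e k)) :
    ∃ L : ℝ, 0 ≤ L ∧ ∀
    (V : Γd d → ℝ) (Mv W : L2 d →L[ℂ] L2 d) (_ : IsMulOp V Mv) (w : Γd d → ℂ)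
    (_ : IsDiag w W) (_ : ∀ x, |V x| * (1 + |(x k : ℝ)|) ≤ ‖w x‖)
    (μ : ℝ) (ψ : L2 d) (_ : (TT (liftT e hp hc) + Mv) ψ = (μ : ℂ) • ψ),
    ‖TT (liftT _ (periodic_fderiv hp k) hck) ψ‖ ^ 2
      ≤ 2 * ‖W ψ‖ * ‖TT (liftT _ (periodic_fderiv hp k) hck) ψ‖ + L * ‖ψ‖ * ‖W ψ‖ := by
  obtain ⟨L, hL, hlip⟩ := lip_line (periodic_fderiv hp k) (contDiff_pd he k) k
  refine ⟨L, hL, fun V Mv W hMv w hW hw μ ψ hψ => ?_⟩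
  set u := TT (liftT _ (periodic_fderiv hp k) hck) ψ with hu
  have hex : ∀ n : ℕ, ∃ D : L2 d →L[ℂ] L2 d,
      IsDiag (fun x => Complex.exp (-(Complex.I * (((1 / ((n : ℝ) + 1) : ℝ) : ℂ) * x k)))) D := by
    intro n
    refine exists_diag _ 1 fun x => ?_
    rw [Complex.norm_exp]; simp
  choose S hS using hex
  have hε := tendsto_one_div_add_atTop_nhds_zero_nat (𝕜 := ℝ)
  have h1 := (diag_tendsto k S _ hε hS u).norm
  have h2 : Filter.Tendsto (fun n : ℕ => L * (1 / ((n : ℝ) + 1)) * (‖ψ‖ * ‖u‖) +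
      (2 * ‖W ψ‖ * ‖u‖ + L * ‖ψ‖ * ‖W ψ‖)) Filter.atTop
      (nhds (L * 0 * (‖ψ‖ * ‖u‖) + (2 * ‖W ψ‖ * ‖u‖ + L * ‖ψ‖ * ‖W ψ‖))) :=
    ((hε.const_mul L).mul_const _).add_const _
  have h3 := le_of_tendsto_of_tendsto' h1 h2 fun n =>
    virial_eps hp he k L hL hlip V Mv W hMv w hW hw hc hck μ ψ hψ _ (by positivity) (S n) (hS n)
  rw [inner_self_eq_norm_sq_to_K] at h3
  simpa using h3

lemma ortho_seq {E : Type*} [NormedAddCommGroup E] [InnerProductSpace ℂ E] (H : E →L[ℂ] E)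
    (hs : ∀ φ χ : E, ⟪H φ, χ⟫ = ⟪φ, H χ⟫) (Δ : Set ℝ)
    (hinf : ¬ FiniteDimensional ℂ (Submodule.span ℂ
      {ψ : E | ψ ≠ 0 ∧ ∃ μ ∈ Δ, H ψ = ((μ : ℝ) : ℂ) • ψ})) :
    ∃ ψ : ℕ → E, Orthonormal ℂ ψ ∧ ∀ n, ∃ μ ∈ Δ, H (ψ n) = ((μ : ℝ) : ℂ) • ψ n := by
  have step : ∀ s : Finset E, (∀ x ∈ s, ‖x‖ = 1 ∧ ∃ μ ∈ Δ, H x = ((μ : ℝ) : ℂ) • x) →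
      ∃ y, (‖y‖ = 1 ∧ ∃ μ ∈ Δ, H y = ((μ : ℝ) : ℂ) • y) ∧ ∀ x ∈ s, ⟪x, y⟫ = 0 := by
    intro s hsP
    set F : Submodule ℂ E := Submodule.span ℂ (s : Set E) with hF
    haveI : FiniteDimensional ℂ F := FiniteDimensional.span_finset ℂ s
    have hex : ∃ ψ : E, ψ ∉ F ∧ ∃ μ ∈ Δ, H ψ = ((μ : ℝ) : ℂ) • ψ := by
      by_contra hcon
      push Not at hcon
      apply hinf
      refine Submodule.finiteDimensional_of_le (S₂ := F) (Submodule.span_le.2 ?_)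
      rintro ψ ⟨_, μ, hμ, h⟩
      by_contra hnot
      exact hcon ψ hnot μ hμ h
    obtain ⟨ψ, hψF, μ, hμ, hψ⟩ := hex
    have hinv : ∀ v ∈ F, H v ∈ F := by
      intro v hv
      induction hv using Submodule.span_induction with
      | mem x hx =>
        obtain ⟨_, ν, _, h⟩ := hsP x hx
        rw [h]
        exact F.smul_mem _ (Submodule.subset_span hx)
      | zero => simp
      | add x y _ _ hx hy => rw [map_add]; exact F.add_mem hx hy
      | smul a x _ hx => rw [map_smul]; exact F.smul_mem _ hx
    have hinv' : ∀ v ∈ Fᗮ, H v ∈ Fᗮ := by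
      intro v hv
      rw [Submodule.mem_orthogonal] at hv ⊢
      intro u hu
      rw [← hs]
      exact hv _ (hinv u hu)
    set q := F.starProjection ψ with hq
    have hqF : q ∈ F := Submodule.starProjection_apply_mem F ψ
    set φ := ψ - q with hφ
    have hφF : φ ∈ Fᗮ := Submodule.sub_starProjection_mem_orthogonal ψ
    have hφ0 : φ ≠ 0 := by
      intro h0
      rw [hφ, sub_eq_zero] at h0
      exact hψF (h0 ▸ hqF)
    have hHφ : H φ = (μ : ℂ) • φ := by
      have h1 : H φ - (μ : ℂ) • φ ∈ Fᗮ := Fᗮ.sub_mem (hinv' _ hφF) (Fᗮ.smul_mem _ hφF)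
      have h2 : H φ - (μ : ℂ) • φ ∈ F := by
        have : H φ - (μ : ℂ) • φ = (μ : ℂ) • q - H q := by
          rw [hφ, map_sub, hψ, smul_sub]; abel
        rw [this]
        exact F.sub_mem (F.smul_mem _ hqF) (hinv _ hqF)
      have h3 := (Submodule.mem_orthogonal _ _).1 h1 _ h2
      rw [inner_self_eq_zero] at h3
      exact sub_eq_zero.1 h3
    refine ⟨((‖φ‖⁻¹ : ℝ) : ℂ) • φ, ⟨?_, μ, hμ, ?_⟩, ?_⟩
    · rw [norm_smul, Complex.norm_real, norm_inv, norm_norm]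
      exact inv_mul_cancel₀ (norm_ne_zero_iff.2 hφ0)
    · rw [map_smul, hHφ, smul_comm]
    · intro x hx
      rw [inner_smul_right, (Submodule.mem_orthogonal _ _).1 hφF x (Submodule.subset_span hx),
        mul_zero]
  obtain ⟨f, hf, hf'⟩ := exists_seq_of_forall_finset_exists _ (fun x y : E => ⟪x, y⟫ = 0) step
  refine ⟨f, ⟨fun n => (hf n).1, ?_⟩, fun n => (hf n).2⟩
  intro m n hmn
  rcases lt_or_gt_of_ne hmn with h | h
  · exact hf' m n h
  · exact inner_eq_zero_symm.1 (hf' n m h)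

lemma weak_null {d : ℕ} {w : Γd d → ℂ} {W : L2 d →L[ℂ] L2 d} (hW : IsDiag w W)
    (hw : Summable fun x => ‖w x‖ ^ 2) (ψ : ℕ → L2 d) (hψ : Orthonormal ℂ ψ) :
    Filter.Tendsto (fun n => ‖W (ψ n)‖) Filter.atTop (nhds 0) := by
  have hsq : ∀ n, ‖W (ψ n)‖ ^ 2 = ∑' x, ‖w x‖ ^ 2 * ‖ψ n x‖ ^ 2 := by
    intro n
    have h := lp.norm_rpow_eq_tsum (p := 2) (by norm_num) (W (ψ n))
    simp only [ENNReal.toReal_ofNat, Real.rpow_ofNat] at h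
    rw [h]
    refine tsum_congr fun x => ?_
    rw [hW, norm_mul, mul_pow]
  have hlim : Filter.Tendsto (fun n => ∑' x, ‖w x‖ ^ 2 * ‖ψ n x‖ ^ 2) Filter.atTop
      (nhds (∑' _ : Γd d, (0 : ℝ))) := by
    refine tendsto_tsum_of_dominated_convergence hw ?_ ?_
    · intro x
      have h1 := (hψ.inner_products_summable (delta x)).tendsto_atTop_zero
      have h2 : ∀ n, ‖⟪ψ n, delta x⟫‖ ^ 2 = ‖ψ n x‖ ^ 2 := by
        intro n
        rw [← inner_conj_symm, RCLike.norm_conj, inner_delta]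
      simp_rw [h2] at h1
      simpa using h1.const_mul (‖w x‖ ^ 2)
    · refine Filter.Eventually.of_forall fun n x => ?_
      have h1 : ‖ψ n x‖ ≤ 1 := by
        have := lp.norm_apply_le_norm (p := 2) (by simp) (ψ n) x
        rwa [hψ.1 n] at this
      rw [Real.norm_eq_abs, abs_of_nonneg (by positivity)]
      have h2 : ‖ψ n x‖ ^ 2 ≤ 1 := pow_le_one₀ (norm_nonneg _) h1
      nlinarith [sq_nonneg ‖w x‖]
  simp only [tsum_zero] at hlim
  have h3 : Filter.Tendsto (fun n => ‖W (ψ n)‖ ^ 2) Filter.atTop (nhds 0) := by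
    simpa only [hsq] using hlim
  have h4 := h3.sqrt
  simpa using h4

lemma phi_summable {d : ℕ} (V : Γd d → ℝ) (hV : Phi 1 2 V < ⊤) :
    Summable fun x => |V x| * (1 + lnorm x) ^ 2 := by
  have hnn : ∀ x, 0 ≤ |V x| * (1 + lnorm x) ^ 2 := fun x => by positivity
  have h : ∑' x, ENNReal.ofReal (|V x| * (1 + lnorm x) ^ 2) ≠ ⊤ := by
    unfold Phi at hV
    simpa using hV.ne
  have h2 := ENNReal.summable_toReal h
  refine h2.congr fun x => ?_
  rw [ENNReal.toReal_ofReal (hnn x)]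

lemma abs_le_lnorm {d : ℕ} (x : Γd d) (k : Fin d) : |(x k : ℝ)| ≤ lnorm x := by
  unfold lnorm
  refine Real.abs_le_sqrt ?_
  exact Finset.single_le_sum (f := fun i => ((x i : ℝ)) ^ 2) (fun i _ => sq_nonneg _)
    (Finset.mem_univ k)

lemma summable_sq {ι : Type*} {f : ι → ℝ} (hf : Summable f) (h0 : ∀ x, 0 ≤ f x) :
    Summable fun x => f x ^ 2 := by
  have hb : ∀ x, f x ≤ ∑' y, f y := fun x => hf.le_tsum x fun y _ => h0 y
  refine (hf.mul_left (∑' y, f y)).of_nonneg_of_le (fun x => sq_nonneg _) fun x => ?_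
  rw [sq]
  exact mul_le_mul_of_nonneg_right (hb x) (h0 x)

/-- From `a² ≤ 2 b a + C b` and `b → 0` conclude `a → 0`. -/
lemma quad_null (a b : ℕ → ℝ) (C : ℝ) (hC : 0 ≤ C) (ha : ∀ n, 0 ≤ a n) (hb : ∀ n, 0 ≤ b n)
    (h : ∀ n, a n ^ 2 ≤ 2 * b n * a n + C * b n)
    (hb0 : Filter.Tendsto b Filter.atTop (nhds 0)) :
    Filter.Tendsto a Filter.atTop (nhds 0) := by
  have hle : ∀ n, a n ≤ 2 * b n + √(C * b n) := by
    intro n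
    have hs := Real.sq_sqrt (mul_nonneg hC (hb n))
    have hs0 := Real.sqrt_nonneg (C * b n)
    by_contra hcon
    push Not at hcon
    have := hb n
    nlinarith [h n]
  refine squeeze_zero ha hle ?_
  have h1 := (hb0.const_mul 2).add (hb0.const_mul C).sqrt
  simpa using h1

/-- Ellipticity of `(e-μ)² + |∇e|²` off the thresholds. -/
lemma elliptic_null {d : ℕ} {e : (Fin d → ℝ) → ℝ} (hp : Periodic2pi e)
    (hc : Continuous e) (hck : ∀ k, Continuous (pd e k)) (μ : ℝ) (hμ : μ ∉ Thr e)
    (ψ : ℕ → L2 d)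
    (h0 : Filter.Tendsto (fun n => TT (liftT e hp hc) (ψ n) - (μ : ℂ) • ψ n) Filter.atTop (nhds 0))
    (hk : ∀ k, Filter.Tendsto (fun n => TT (liftT _ (periodic_fderiv hp k) (hck k)) (ψ n))
      Filter.atTop (nhds 0)) :
    Filter.Tendsto ψ Filter.atTop (nhds 0) := by
  set E := liftT e hp hc with hE
  set A : Fin d → C(Tor d, ℂ) := fun k => liftT _ (periodic_fderiv hp k) (hck k) with hA
  set E0 : C(Tor d, ℂ) := E - (μ : ℂ) • 1 with hE0
  set g : C(Tor d, ℂ) := E0 * E0 + ∑ k, A k * A k with hg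
  have hg0 : ∀ t, g t ≠ 0 := by
    intro t
    set p : Fin d → ℝ := fun i => -(2 * π) * (Quotient.out (t i)) with hpdef
    have h1 : g t = (((e p - μ) ^ 2 + ∑ k, pd e k p ^ 2 : ℝ) : ℂ) := by
      have hA1 : ∀ k, A k t = (pd e k p : ℂ) := fun k => rfl
      have hE1 : E t = (e p : ℂ) := rfl
      rw [hg, ContinuousMap.add_apply, ContinuousMap.mul_apply, hE0, ContinuousMap.sub_apply,
        ContinuousMap.smul_apply, ContinuousMap.one_apply, ContinuousMap.sum_apply, hE1]
      simp only [ContinuousMap.mul_apply, hA1]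
      push_cast
      simp [sq]
    rw [h1]
    intro hz
    have hz' : (e p - μ) ^ 2 + ∑ k, pd e k p ^ 2 = 0 := by exact_mod_cast hz
    have hs : 0 ≤ ∑ k, pd e k p ^ 2 := Finset.sum_nonneg fun k _ => sq_nonneg _
    have ha : (e p - μ) ^ 2 = 0 := by nlinarith [sq_nonneg (e p - μ)]
    have hb : ∑ k, pd e k p ^ 2 = 0 := by nlinarith [sq_nonneg (e p - μ)]
    have hb' : ∀ k, pd e k p = 0 := by
      intro k
      have := (Finset.sum_eq_zero_iff_of_nonneg (fun k _ => sq_nonneg (pd e k p))).1 hb k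
        (Finset.mem_univ k)
      exact pow_eq_zero_iff (two_ne_zero) |>.1 this
    apply hμ
    refine ⟨p, ?_, ?_⟩
    · change fderiv ℝ e p = 0
      refine ContinuousLinearMap.coe_injective (LinearMap.pi_ext' fun k => ?_)
      refine LinearMap.ext_ring ?_
      simpa [pd] using hb' k
    · have := pow_eq_zero_iff (two_ne_zero) |>.1 ha
      linarith
  set ig : C(Tor d, ℂ) := ⟨fun t => (g t)⁻¹, g.continuous.inv₀ hg0⟩ with hig
  have hinv : ig * g = 1 := by
    ext t
    change (g t)⁻¹ * g t = 1
    exact inv_mul_cancel₀ (hg0 t)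
  have hrep : ∀ n, ψ n = TT ig (TT E0 (TT E (ψ n) - (μ : ℂ) • ψ n) + ∑ k, TT (A k) (TT (A k) (ψ n))) := by
    intro n
    have hE0ψ : TT E (ψ n) - (μ : ℂ) • ψ n = TT E0 (ψ n) := by
      rw [hE0, TT_sub, TT_smul]
      change _ = TT E (ψ n) - (μ : ℂ) • TT 1 (ψ n)
      rw [TT_one]
    have hgψ : TT g (ψ n) = TT E0 (TT E0 (ψ n)) + ∑ k, TT (A k) (TT (A k) (ψ n)) := by
      rw [hg, TT_add, TT_sum]
      simp [TT_mul]
    rw [hE0ψ, ← hgψ, ← TT_mul, hinv, TT_one]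
  have hlim : Filter.Tendsto (fun n => TT ig (TT E0 (TT E (ψ n) - (μ : ℂ) • ψ n) +
      ∑ k, TT (A k) (TT (A k) (ψ n)))) Filter.atTop (nhds (TT ig (TT E0 0 + ∑ k, TT (A k) 0))) := by
    refine ((TT ig).continuous.tendsto _).comp (Filter.Tendsto.add ?_ ?_)
    · exact ((TT E0).continuous.tendsto _).comp h0
    · exact tendsto_finset_sum _ fun k _ => ((TT (A k)).continuous.tendsto _).comp (hk k)
  simp only [map_zero, Finset.sum_const_zero, add_zero] at hlim
  exact hlim.congr fun n => (hrep n).symm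

/-- Eigenvalues only accumulate at thresholds.
If `𝔢` is a `C⁴` dispersion relation satisfying (M) and `Φ_{1,2}(V) < ∞`, then for
every compact `Δ ⊂ ℝ` with `Δ ∩ Thr(𝔢) = ∅` the total multiplicity of the
eigenvalues of `H(𝔢,V)` in `Δ` is finite. -/
theorem statement7 (d : ℕ)
    (e : (Fin d → ℝ) → ℝ) (he : IsDispersion e) (heC4 : ContDiff ℝ 4 e) (heM : CondM e)
    (V : Γd d → ℝ) (hV : Phi 1 2 V < ⊤)
    (Hop Mv : L2 d →L[ℂ] L2 d) (hHop : IsMultiplier e Hop) (hMv : IsMulOp V Mv)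
    (Δ : Set ℝ) (hΔc : IsCompact Δ) (hΔ : Δ ∩ Thr e = ∅) :
    Module.rank ℂ (Submodule.span ℂ
        {ψ : L2 d | ψ ≠ 0 ∧ ∃ μ ∈ Δ, (Hop + Mv) ψ = (μ : ℂ) • ψ}) < Cardinal.aleph0 := by


  by_contra hcon
  have hinf : ¬ FiniteDimensional ℂ (Submodule.span ℂ
      {ψ : L2 d | ψ ≠ 0 ∧ ∃ μ ∈ Δ, (Hop + Mv) ψ = (μ : ℂ) • ψ}) := fun h =>
    hcon (Module.rank_lt_aleph0_iff.2 h)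
  have hp : Periodic2pi e := he.1
  have hc : Continuous e := heC4.continuous
  have he2 : ContDiff ℝ 2 e := heC4.of_le (by norm_num)
  have hck : ∀ k, Continuous (pd e k) := fun k => continuous_pd (he2.of_le (by norm_num)) k
  have hH : Hop = TT (liftT e hp hc) := multiplier_eq hp hc Hop hHop
  subst hH
  have hsym : ∀ φ χ : L2 d, ⟪(TT (liftT e hp hc) + Mv) φ, χ⟫ =
      ⟪φ, (TT (liftT e hp hc) + Mv) χ⟫ := by
    intro φ χ
    have h1 : IsDiag (fun x => (V x : ℂ)) Mv := hMv
    have h2 : IsDiag (fun x => starRingEnd ℂ (V x : ℂ)) Mv := by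
      intro φ x; simpa using hMv φ x
    have h3 := diag_adj h1 h2 φ χ
    have h4 := TT_adj _ (liftT_real hp hc) φ χ
    change ⟪TT (liftT e hp hc) φ + Mv φ, χ⟫ = ⟪φ, TT (liftT e hp hc) χ + Mv χ⟫
    rw [inner_add_left, inner_add_right, h3, h4]
  obtain ⟨ψ0, hon0, hev0⟩ := ortho_seq _ hsym Δ hinf
  choose μ0 hμ0 hev0 using hev0
  obtain ⟨μ, hμ, s, hs, hlim⟩ := hΔc.tendsto_subseq hμ0
  set ψ : ℕ → L2 d := ψ0 ∘ s with hψdef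
  have hon : Orthonormal ℂ ψ := hon0.comp s hs.injective
  have hev : ∀ n, (TT (liftT e hp hc) + Mv) (ψ n) = ((μ0 (s n) : ℝ) : ℂ) • ψ n :=
    fun n => hev0 (s n)
  have hl0 : ∀ x : Γd d, 0 ≤ lnorm x := fun x => Real.sqrt_nonneg _
  have hsum := phi_summable V hV
  set w : Γd d → ℂ := fun x => ((|V x| * (1 + lnorm x) ^ 2 : ℝ) : ℂ) with hwdef
  have hwn : ∀ x, ‖w x‖ = |V x| * (1 + lnorm x) ^ 2 := by
    intro x
    rw [hwdef]
    simp only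
    rw [Complex.norm_real, Real.norm_eq_abs, abs_of_nonneg (by positivity)]
  obtain ⟨W, hW⟩ := exists_diag w (∑' x, |V x| * (1 + lnorm x) ^ 2) (by
    intro x
    rw [hwn]
    exact hsum.le_tsum x fun y _ => by positivity)
  have hWlim : Filter.Tendsto (fun n => ‖W (ψ n)‖) Filter.atTop (nhds 0) := by
    refine weak_null hW ?_ ψ hon
    simp_rw [hwn]
    exact summable_sq hsum fun x => by positivity
  have hwV : ∀ k x, |V x| * (1 + |(x k : ℝ)|) ≤ ‖w x‖ := by
    intro k x
    rw [hwn]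
    refine mul_le_mul_of_nonneg_left ?_ (abs_nonneg _)
    nlinarith [abs_le_lnorm x k, hl0 x]
  have hk : ∀ k, Filter.Tendsto (fun n => TT (liftT _ (periodic_fderiv hp k) (hck k)) (ψ n))
      Filter.atTop (nhds 0) := by
    intro k
    obtain ⟨L, hL, hvir⟩ := virial hp he2 k hc (hck k)
    rw [tendsto_zero_iff_norm_tendsto_zero]
    refine quad_null _ _ L hL (fun n => norm_nonneg _) (fun n => norm_nonneg _) ?_ hWlim
    intro n
    have := hvir V Mv W hMv w hW (hwV k) _ (ψ n) (hev n)
    rwa [hon.1 n, mul_one] at this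
  have hVW : ∀ n, ‖Mv (ψ n)‖ ≤ ‖W (ψ n)‖ := by
    intro n
    refine diag_bound (w := fun x => (V x : ℂ)) hMv hW (fun x => ?_) (ψ n)
    rw [hwn, Complex.norm_real, Real.norm_eq_abs]
    exact le_mul_of_one_le_right (abs_nonneg _) (one_le_pow₀ (by linarith [hl0 x]))
  have h0 : Filter.Tendsto (fun n => TT (liftT e hp hc) (ψ n) - (μ : ℂ) • ψ n)
      Filter.atTop (nhds 0) := by
    rw [tendsto_zero_iff_norm_tendsto_zero]
    have hle : ∀ n, ‖TT (liftT e hp hc) (ψ n) - (μ : ℂ) • ψ n‖ ≤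
        |μ0 (s n) - μ| + ‖W (ψ n)‖ := by
      intro n
      have h1 : TT (liftT e hp hc) (ψ n) - (μ : ℂ) • ψ n =
          ((μ0 (s n) - μ : ℝ) : ℂ) • ψ n - Mv (ψ n) := by
        have h2 : TT (liftT e hp hc) (ψ n) + Mv (ψ n) = ((μ0 (s n) : ℝ) : ℂ) • ψ n := hev n
        rw [Complex.ofReal_sub, sub_smul, ← h2]
        abel
      rw [h1]
      refine (norm_sub_le _ _).trans (add_le_add ?_ (hVW n))
      rw [norm_smul, hon.1 n, mul_one, Complex.norm_real, Real.norm_eq_abs]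
    refine squeeze_zero (fun n => norm_nonneg _) hle ?_
    have h3 : Filter.Tendsto (fun n => |μ0 (s n) - μ|) Filter.atTop (nhds 0) := by
      have h4 : Filter.Tendsto (fun n => μ0 (s n) - μ) Filter.atTop (nhds (μ - μ)) :=
        hlim.sub_const μ
      rw [sub_self] at h4
      simpa using h4.abs
    simpa using h3.add hWlim
  have hμT : μ ∉ Thr e := fun h => by
    have : μ ∈ Δ ∩ Thr e := ⟨hμ, h⟩
    rw [hΔ] at this
    exact this
  have hfin := (elliptic_null hp hc hck μ hμT ψ h0 hk).norm
  simp only [hon.1, norm_zero] at hfin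
  exact one_ne_zero (tendsto_nhds_unique tendsto_const_nhds hfin)

end LatSch
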